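/- Let (Ω,ℱ,P) be a probability space, S a random element of a standard Borel space 𝒮 with law μ, κ_1,…,κ_p Markov kernels from 𝒮 to ℝ, and H0 ⊆ {1,…,p} with complement G = {1,…,p} \ H0. Suppose the joint law of (A, Ã, S, Y) ∈ ℝ^p × ℝ^p × 𝒮 × 𝒴 (𝒴 a standard Borel space) is obtained by drawing S ~ μ; then, conditionally on S, drawing A_1,…,A_p, Ã_1,…,Ã_p mutually independently with A_j and Ã_j each distributed according to κ_j(S, ·); and then drawing Y from ν((S, A_G), ·) for a Markov kernel ν from 𝒮 × ℝ^G to 𝒴, so that the conditional law of Y given (S, A, Ã) depends only on S and the coordinates A_j with j ∈ G. Then for every subset Ω ⊆ H0, the quadruple ([A, Ã]_swap(Ω), S, Y) has the same joint distribution as ((A, Ã), S, Y). -/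

import Mathlib

open MeasureTheory ProbabilityTheory

/-- The swapped pair `[a, ã]_swap(Ω)`: for `j ∈ Ω` the `j`-th coordinates of `a` and `ã`
are exchanged, all other coordinates are left unchanged. -/
def swapPair {p : ℕ} (Ωs : Finset (Fin p)) (a a' : Fin p → ℝ) :
    (Fin p → ℝ) × (Fin p → ℝ) :=
  (fun j => if j ∈ Ωs then a' j else a j, fun j => if j ∈ Ωs then a j else a' j)

/-!
Given `S = s`, the law of `(A, Ã)` is the product of two copies of one product measure, so it is
invariant under exchanging the `i`-th coordinates of the two copies for any set of indices `i`.
If these indices avoid `G`, the exchange leaves `A_G` alone, hence commutes with drawing `Y` from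
`ν (s, A_G)`. So the swap preserves every conditional law given `S = s`, and with them the mixture
over `S ~ μ`.
-/

section Mixtures

variable {X X' Y Z Z' : Type*} [MeasurableSpace X] [MeasurableSpace X'] [MeasurableSpace Y]
  [MeasurableSpace Z] [MeasurableSpace Z']

lemma measurePreserving_bind {m : Measure X} {m' : Measure X'} {f : X → X'} {g : Z → Z'}
    {F : X → Measure Z} {F' : X' → Measure Z'} (hf : MeasurePreserving f m m')
    (hg : Measurable g) (hF : Measurable F) (hF' : Measurable F')
    (h : ∀ x, (F x).map g = F' (f x)) :
    MeasurePreserving g (m.bind F) (m'.bind F') where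
  measurable := hg
  map_eq := calc
    (m.bind F).map g = m.bind fun x => (F x).map g := by
      rw [Measure.bind, Measure.bind, ← Measure.join_map_map hg,
        Measure.map_map (Measure.measurable_map g hg) hF]
      rfl
    _ = m.bind (F' ∘ f) := congrArg m.bind (funext h)
    _ = (m.map f).bind F' := by rw [Measure.bind, Measure.bind, Measure.map_map hF' hf.measurable]
    _ = m'.bind F' := by rw [hf.map_eq]

lemma measurable_map_kernel (κ : Kernel X Y) [IsSFiniteKernel κ] {f : X → Y → Z}
    (hf : Measurable f.uncurry) : Measurable fun x => (κ x).map (f x) := by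
  have map_eq (x : X) : (κ x).map (f x) = ((Kernel.id ×ₖ κ) x).map f.uncurry := by
    rw [Kernel.prod_apply, Kernel.id_apply, Measure.dirac_prod,
      Measure.map_map hf measurable_prodMk_left]
    rfl
  simp_rw [map_eq]
  exact (Measure.measurable_map _ hf).comp (Kernel.measurable _)

lemma measurable_bind_kernel (κ : Kernel X Y) [IsSFiniteKernel κ] {F : X → Y → Measure Z}
    (hF : Measurable F.uncurry) : Measurable fun x => (κ x).bind (F x) :=
  Measure.measurable_join.comp (measurable_map_kernel κ hF)

end Mixtures

section Product

variable {ι : Type*} [Fintype ι] {E : ι → Type*} [∀ i, MeasurableSpace (E i)]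
  {𝒮 : Type*} [MeasurableSpace 𝒮]

lemma measurable_pi_kernel (κ : ∀ i, Kernel 𝒮 (E i)) [∀ i, IsFiniteKernel (κ i)] :
    Measurable fun s => Measure.pi fun i => κ i s := by
  refine Measurable.measure_of_isPiSystem generateFrom_pi.symm isPiSystem_pi ?_ ?_
  · rintro _ ⟨t, ht, rfl⟩
    simp_rw [Measure.pi_pi]
    exact Finset.measurable_prod _ fun i _ => (κ i).measurable_coe (ht i (Set.mem_univ i))
  · simp_rw [Measure.pi_univ]
    exact Finset.measurable_prod _ fun i _ => (κ i).measurable_coe .univ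

/-- The kernel that draws the coordinates independently, the `i`-th one from `κ i`. -/
noncomputable def piKernel (κ : ∀ i, Kernel 𝒮 (E i)) [∀ i, IsFiniteKernel (κ i)] :
    Kernel 𝒮 (∀ i, E i) where
  toFun s := Measure.pi fun i => κ i s
  measurable' := measurable_pi_kernel κ

instance piKernel.instIsFiniteKernel (κ : ∀ i, Kernel 𝒮 (E i)) [∀ i, IsFiniteKernel (κ i)] :
    IsFiniteKernel (piKernel κ) where
  exists_univ_le := by
    refine ⟨∏ i, (κ i).bound, ENNReal.prod_lt_top fun i _ => (κ i).bound_lt_top, fun s => ?_⟩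
    rw [piKernel, Kernel.coe_mk, Measure.pi_univ]
    exact Finset.prod_le_prod' fun i _ => (κ i).measure_le_bound s Set.univ

end Product

section Swap

variable {ι : Type*} [DecidableEq ι] {E : ι → Type*}

/-- The pair `q` with its two coordinates at `i` exchanged for each `i ∈ T`. This is `swapPair`
for an arbitrary index type and coordinate spaces depending on the index. -/
def swapCoords (T : Finset ι) (q : (∀ i, E i) × (∀ i, E i)) : (∀ i, E i) × (∀ i, E i) :=
  (T.piecewise q.2 q.1, T.piecewise q.1 q.2)

lemma restrict_swapCoords_fst {T G : Finset ι} (h : Disjoint T G)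
    (q : (∀ i, E i) × (∀ i, E i)) : G.restrict (swapCoords T q).1 = G.restrict q.1 :=
  funext fun j => T.piecewise_eq_of_notMem _ _ (Finset.disjoint_right.mp h j.2)

lemma swapCoords_preimage_pi_prod_pi (T : Finset ι) (s t : ∀ i, Set (E i)) :
    swapCoords T ⁻¹' (Set.univ.pi s ×ˢ Set.univ.pi t) =
      Set.univ.pi (T.piecewise t s) ×ˢ Set.univ.pi (T.piecewise s t) := by
  ext q
  simp only [swapCoords, Set.mem_preimage, Set.mem_prod, Set.mem_univ_pi, ← forall_and]
  refine forall_congr' fun i => ?_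
  by_cases hi : i ∈ T <;> simp [hi, and_comm]

variable [∀ i, MeasurableSpace (E i)]

lemma measurable_swapCoords (T : Finset ι) : Measurable (swapCoords (E := E) T) := by
  refine .prodMk (measurable_pi_lambda _ fun i => ?_) (measurable_pi_lambda _ fun i => ?_) <;>
    by_cases hi : i ∈ T <;> simp only [Finset.piecewise, hi, if_true, if_false] <;> fun_prop

lemma measurePreserving_swapCoords [Fintype ι] (m : ∀ i, Measure (E i)) [∀ i, SigmaFinite (m i)]
    (T : Finset ι) :
    MeasurePreserving (swapCoords T) ((Measure.pi m).prod (Measure.pi m))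
      ((Measure.pi m).prod (Measure.pi m)) where
  measurable := measurable_swapCoords T
  map_eq := by
    have spanning := Measure.FiniteSpanningSetsIn.pi fun i => (m i).toFiniteSpanningSetsIn
    refine (Measure.prod_eq_generateFrom generateFrom_pi generateFrom_pi isPiSystem_pi
      isPiSystem_pi spanning spanning ?_).symm
    rintro _ ⟨s, hs, rfl⟩ _ ⟨t, ht, rfl⟩
    rw [Measure.map_apply (measurable_swapCoords T)
        ((MeasurableSet.univ_pi fun i => hs i trivial).prod (.univ_pi fun i => ht i trivial)),
      swapCoords_preimage_pi_prod_pi, Measure.prod_prod]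
    simp_rw [Measure.pi_pi, ← Finset.prod_mul_distrib]
    refine Finset.prod_congr rfl fun i _ => ?_
    by_cases hi : i ∈ T <;> simp [hi, mul_comm]

end Swap

section Knockoff

variable {ι : Type*} {E : ι → Type*} {𝒮 𝒴 : Type*}

/-- `swapCoords T` acting on the pair `(a, ã)` inside a quadruple `(a, ã, s, y)`. -/
def swapQuadruple [DecidableEq ι] (T : Finset ι) (x : (∀ i, E i) × (∀ i, E i) × 𝒮 × 𝒴) :
    (∀ i, E i) × (∀ i, E i) × 𝒮 × 𝒴 :=
  ((swapCoords T (x.1, x.2.1)).1, (swapCoords T (x.1, x.2.1)).2, x.2.2)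

variable [∀ i, MeasurableSpace (E i)] [MeasurableSpace 𝒮] [MeasurableSpace 𝒴]

lemma measurable_swapQuadruple [DecidableEq ι] (T : Finset ι) :
    Measurable (swapQuadruple (E := E) (𝒮 := 𝒮) (𝒴 := 𝒴) T) := by
  have measurable_swap :
      Measurable fun x : (∀ i, E i) × (∀ i, E i) × 𝒮 × 𝒴 => swapCoords T (x.1, x.2.1) :=
    (measurable_swapCoords T).comp (by fun_prop)
  exact measurable_swap.fst.prodMk (measurable_swap.snd.prodMk (by fun_prop))

variable (G : Finset ι) (ν : Kernel (𝒮 × (∀ i : G, E i)) 𝒴)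

/-- The conditional law of `(A, Ã, S, Y)` given `S = s` and `(A, Ã) = q`: the first three
components are deterministic and `Y` has law `ν (s, A_G)`. -/
noncomputable def responseLaw (s : 𝒮) (q : (∀ i, E i) × (∀ i, E i)) :
    Measure ((∀ i, E i) × (∀ i, E i) × 𝒮 × 𝒴) :=
  (ν (s, G.restrict q.1)).map fun y => (q.1, q.2, s, y)

lemma measurable_responseLaw [IsSFiniteKernel ν] : Measurable (responseLaw G ν).uncurry := by
  have measurable_restrict :
      Measurable fun x : 𝒮 × (∀ i, E i) × (∀ i, E i) => (x.1, G.restrict x.2.1) := by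
    fun_prop
  refine measurable_map_kernel (ν.comap _ measurable_restrict)
    (f := fun x y => (x.2.1, x.2.2, x.1, y)) ?_
  unfold Function.uncurry
  fun_prop

variable {G} in
lemma map_swapQuadruple_responseLaw [DecidableEq ι] {T : Finset ι} (hT : Disjoint T G) (s : 𝒮)
    (q : (∀ i, E i) × (∀ i, E i)) :
    (responseLaw G ν s q).map (swapQuadruple T) = responseLaw G ν s (swapCoords T q) := by
  rw [responseLaw, responseLaw, restrict_swapCoords_fst hT,
    Measure.map_map (measurable_swapQuadruple T) (by fun_prop)]
  rfl

variable [Fintype ι] (κ : ∀ i, Kernel 𝒮 (E i))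

/-- The conditional law of `(A, Ã, S, Y)` given `S = s`, where `A i` and `Ã i` are independent
draws from `κ i s` and `Y` is drawn from `ν (s, A_G)`. -/
noncomputable def knockoffCondLaw (s : 𝒮) : Measure ((∀ i, E i) × (∀ i, E i) × 𝒮 × 𝒴) :=
  ((Measure.pi fun i => κ i s).prod (Measure.pi fun i => κ i s)).bind (responseLaw G ν s)

variable [∀ i, IsFiniteKernel (κ i)] [IsSFiniteKernel ν]

lemma measurable_knockoffCondLaw : Measurable (knockoffCondLaw G ν κ) := by
  have measurable_bind :=
    measurable_bind_kernel (piKernel κ ×ₖ piKernel κ) (measurable_responseLaw G ν)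
  simp_rw [Kernel.prod_apply] at measurable_bind
  exact measurable_bind

variable {G} [DecidableEq ι] {T : Finset ι}

lemma map_swapQuadruple_knockoffCondLaw (hT : Disjoint T G) (s : 𝒮) :
    (knockoffCondLaw G ν κ s).map (swapQuadruple T) = knockoffCondLaw G ν κ s := by
  have measurable_response : Measurable (responseLaw G ν s) :=
    (measurable_responseLaw G ν).of_uncurry_left
  exact (measurePreserving_bind (measurePreserving_swapCoords (fun i => κ i s) T)
    (measurable_swapQuadruple T) measurable_response measurable_response
    (map_swapQuadruple_responseLaw ν hT s)).map_eq

lemma measurePreserving_swapQuadruple (hT : Disjoint T G) (μ : Measure 𝒮) :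
    MeasurePreserving (swapQuadruple T) (μ.bind (knockoffCondLaw G ν κ))
      (μ.bind (knockoffCondLaw G ν κ)) :=
  measurePreserving_bind (.id μ) (measurable_swapQuadruple T)
    (measurable_knockoffCondLaw G ν κ) (measurable_knockoffCondLaw G ν κ)
    (map_swapQuadruple_knockoffCondLaw ν κ hT)

end Knockoff

theorem knockoff_swap_null_exchangeable_general {ι : Type*} [Fintype ι] [DecidableEq ι]
    {E : ι → Type*} [∀ i, MeasurableSpace (E i)] {Ω 𝒮 𝒴 : Type*}
    [MeasurableSpace Ω] [MeasurableSpace 𝒮] [MeasurableSpace 𝒴]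
    (P : Measure Ω) (μ : Measure 𝒮)
    (κ : ∀ i, Kernel 𝒮 (E i)) [∀ i, IsFiniteKernel (κ i)]
    {G T : Finset ι} (hT : Disjoint T G)
    (ν : Kernel (𝒮 × (∀ i : G, E i)) 𝒴) [IsSFiniteKernel ν]
    {A A' : Ω → ∀ i, E i} {S : Ω → 𝒮} {Y : Ω → 𝒴}
    (hA : AEMeasurable A P) (hA' : AEMeasurable A' P) (hS : AEMeasurable S P)
    (hY : AEMeasurable Y P)
    (hlaw : P.map (fun ω => (A ω, A' ω, S ω, Y ω)) = μ.bind (knockoffCondLaw G ν κ)) :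
    P.map (fun ω => ((swapCoords T (A ω, A' ω)).1, (swapCoords T (A ω, A' ω)).2, S ω, Y ω)) =
      P.map fun ω => (A ω, A' ω, S ω, Y ω) := by
  have aemeasurable_quadruple : AEMeasurable (fun ω => (A ω, A' ω, S ω, Y ω)) P := by fun_prop
  calc
    _ = (P.map fun ω => (A ω, A' ω, S ω, Y ω)).map (swapQuadruple T) :=
      (AEMeasurable.map_map_of_aemeasurable (measurable_swapQuadruple T).aemeasurable
        aemeasurable_quadruple).symm
    _ = _ := by rw [hlaw, (measurePreserving_swapQuadruple ν κ hT μ).map_eq]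

/-- exchangeability with the response when swapping null coordinates,
Lemma 2.  Let `S ~ μ` on a standard Borel space `𝒮`; conditionally on `S` the `2p`
coordinates of `(A, Ã)` are drawn mutually independently, `A_j` and `Ã_j` each with law
`κ_j(S,·)`; and then `Y` is drawn from `ν((S, A_G),·)` where `G = {1,…,p} \ H0`, so that the
conditional law of `Y` given `(S, A, Ã)` depends only on `S` and the coordinates `A_j`,
`j ∈ G`.  Then for every subset `Ω ⊆ H0`, the quadruple `([A, Ã]_swap(Ω), S, Y)` has the
same joint distribution as `((A, Ã), S, Y)`. -/
theorem knockoff_swap_null_exchangeable {p : ℕ} {Ω 𝒮 𝒴 : Type*}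
    [MeasurableSpace Ω] [MeasurableSpace 𝒮] [StandardBorelSpace 𝒮]
    [MeasurableSpace 𝒴] [StandardBorelSpace 𝒴]
    (P : Measure Ω) [IsProbabilityMeasure P]
    (μ : Measure 𝒮) [IsProbabilityMeasure μ]
    (κ : Fin p → Kernel 𝒮 ℝ) [∀ j, IsMarkovKernel (κ j)]
    (H0 G : Finset (Fin p)) (hG : G = H0ᶜ)
    (ν : Kernel (𝒮 × ({j : Fin p // j ∈ G} → ℝ)) 𝒴) [IsMarkovKernel ν]
    (A A' : Ω → Fin p → ℝ) (S : Ω → 𝒮) (Y : Ω → 𝒴)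
    (hA : Measurable A) (hA' : Measurable A') (hS : Measurable S) (hY : Measurable Y)
    (hlaw : P.map (fun ω => (A ω, A' ω, S ω, Y ω)) =
      μ.bind fun s =>
        ((Measure.pi fun j => κ j s).prod (Measure.pi fun j => κ j s)).bind
          fun q : (Fin p → ℝ) × (Fin p → ℝ) =>
            Measure.map (fun y => (q.1, q.2, s, y))
              (ν (s, fun j : {j : Fin p // j ∈ G} => q.1 j.1))) :
    ∀ Ωs : Finset (Fin p), Ωs ⊆ H0 →
      P.map (fun ω => ((swapPair Ωs (A ω) (A' ω)).1, (swapPair Ωs (A ω) (A' ω)).2, S ω, Y ω))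
        = P.map (fun ω => (A ω, A' ω, S ω, Y ω)) := by
  intro Ωs hΩs
  have hdisj : Disjoint Ωs G := hG ▸ disjoint_compl_right.mono_left hΩs
  exact knockoff_swap_null_exchangeable_general P μ κ hdisj ν hA.aemeasurable hA'.aemeasurable
    hS.aemeasurable hY.aemeasurable hlaw
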